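/- arXiv:1111.2874 — 3 statements merged into one kernel-verified Lean document; each statement's English description precedes it below -/
import Mathlib

section
/- Let a, b, c be nonzero complex numbers and let Ω = {p ∈ ℂ³ \ {0} : F^n(p) → 0} be the basin of attraction of F. Then Ω is invariant under the torus action: if (z, t, w) ∈ Ω and λ ∈ ℂ*, then (λz, t/λ, w) ∈ Ω. -/
/-!
Each factor of `F` multiplies `z` and `t` by functions of `(zt, w)` and replaces `w` by a function
of `(zt, w)`. Since the torus action preserves `(zt, w)`, it commutes with every such map, hence
with `F`; being linear and invertible, it carries nonzero points with orbits tending to `0` to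
points of the same kind.
-/

open Filter Set

/-- The shear `φ₁(z,t,w) = (z, t, w − zt)`. -/
noncomputable def φ₁ (p : ℂ × ℂ × ℂ) : ℂ × ℂ × ℂ :=
  (p.1, p.2.1, p.2.2 - p.1 * p.2.1)

/-- The inverse shear `φ₁⁻¹(z,t,w) = (z, t, w + zt)`. -/
noncomputable def φ₁inv (p : ℂ × ℂ × ℂ) : ℂ × ℂ × ℂ :=
  (p.1, p.2.1, p.2.2 + p.1 * p.2.1)

/-- The overshear `φ₂(z,t,w) = (z·e^{aw}, t·e^{bw}, w)`. -/
noncomputable def φ₂ (a b : ℂ) (p : ℂ × ℂ × ℂ) : ℂ × ℂ × ℂ :=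
  (p.1 * Complex.exp (a * p.2.2), p.2.1 * Complex.exp (b * p.2.2), p.2.2)

/-- The inverse overshear `φ₂⁻¹(z,t,w) = (z·e^{−aw}, t·e^{−bw}, w)`. -/
noncomputable def φ₂inv (a b : ℂ) (p : ℂ × ℂ × ℂ) : ℂ × ℂ × ℂ :=
  (p.1 * Complex.exp (-(a * p.2.2)), p.2.1 * Complex.exp (-(b * p.2.2)), p.2.2)

/-- The overshear `φ₃(z,t,w) = (z, t, w·e^{−(a+b+c)zt} + (a+b)z²t²)`. -/
noncomputable def φ₃ (a b c : ℂ) (p : ℂ × ℂ × ℂ) : ℂ × ℂ × ℂ :=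
  (p.1, p.2.1,
    p.2.2 * Complex.exp (-((a + b + c) * p.1 * p.2.1)) + (a + b) * p.1 ^ 2 * p.2.1 ^ 2)

/-- The automorphism `F = φ₃ ∘ φ₂⁻¹ ∘ φ₁⁻¹ ∘ φ₂ ∘ φ₁` of `ℂ³`. -/
noncomputable def Fmap (a b c : ℂ) : ℂ × ℂ × ℂ → ℂ × ℂ × ℂ :=
  φ₃ a b c ∘ φ₂inv a b ∘ φ₁inv ∘ φ₂ a b ∘ φ₁

/-- The projection `π(z,t,w) = (zt, w)`. -/
def πmap (p : ℂ × ℂ × ℂ) : ℂ × ℂ := (p.1 * p.2.1, p.2.2)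

/-- The basin of attraction `Ω = {p ∈ ℂ³ \ {0} : F^[n] p → 0}` of `F`. -/
noncomputable def basinF (a b c : ℂ) : Set (ℂ × ℂ × ℂ) :=
  {p | p ≠ 0 ∧ Tendsto (fun n => (Fmap a b c)^[n] p) atTop (nhds 0)}

/-- The basin of attraction `Ω̃ = {q ∈ ℂ² \ {0} : G^[n] q → 0}` of a map `G : ℂ² → ℂ²`. -/
noncomputable def basinG (G : ℂ × ℂ → ℂ × ℂ) : Set (ℂ × ℂ) :=
  {q | q ≠ 0 ∧ Tendsto (fun n => G^[n] q) atTop (nhds 0)}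

theorem tendsto_iterate_of_semiconj {X Y : Type*} [TopologicalSpace X] [TopologicalSpace Y]
    {T : X → Y} {f : X → X} {g : Y → Y} (hT : Function.Semiconj T f g) {x x₀ : X}
    (hcont : ContinuousAt T x₀) (hlim : Tendsto (fun n => f^[n] x) atTop (nhds x₀)) :
    Tendsto (fun n => g^[n] (T x)) atTop (nhds (T x₀)) :=
  (hcont.tendsto.comp hlim).congr fun n => hT.iterate_right n x

/-- The action `(z, t, w) ↦ (λz, t/λ, w)` of `λ ∈ ℂ*` on `ℂ³`. It is bundled as a continuous linear
automorphism, with `ℂ*` encoded as the units of `ℂ`. -/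
noncomputable def torusAct (lam : ℂˣ) : (ℂ × ℂ × ℂ) ≃L[ℂ] (ℂ × ℂ × ℂ) :=
  (ContinuousLinearEquiv.unitsEquivAut ℂ lam).prodCongr
    ((ContinuousLinearEquiv.unitsEquivAut ℂ lam⁻¹).prodCongr (ContinuousLinearEquiv.refl ℂ ℂ))

theorem torusAct_apply (lam : ℂˣ) (p : ℂ × ℂ × ℂ) :
    torusAct lam p = (lam * p.1, p.2.1 / lam, p.2.2) := by
  simp [torusAct, mul_comm, div_eq_mul_inv]

theorem πmap_torusAct (lam : ℂˣ) (p : ℂ × ℂ × ℂ) : πmap (torusAct lam p) = πmap p := by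
  have hprod : (lam * p.1) * (p.2.1 / lam) = p.1 * p.2.1 := by field_simp
  simp only [torusAct_apply, πmap, hprod]

theorem commute_torusAct_of_πmap {Φ : ℂ × ℂ × ℂ → ℂ × ℂ × ℂ} (f g h : ℂ × ℂ → ℂ)
    (hΦ : ∀ p, Φ p = (p.1 * f (πmap p), p.2.1 * g (πmap p), h (πmap p))) (lam : ℂˣ) :
    Function.Commute (torusAct lam) Φ := fun p => by
  rw [hΦ, hΦ, πmap_torusAct, torusAct_apply, torusAct_apply]
  ext
  · exact (mul_assoc _ _ _).symm
  · exact mul_div_right_comm _ _ _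
  · rfl

section Factors

variable (lam : ℂˣ) (a b c : ℂ)

theorem commute_torusAct_φ₁ : Function.Commute (torusAct lam) φ₁ :=
  commute_torusAct_of_πmap 1 1 (fun q => q.2 - q.1) (fun p => by simp [φ₁, πmap]) lam

theorem commute_torusAct_φ₁inv : Function.Commute (torusAct lam) φ₁inv :=
  commute_torusAct_of_πmap 1 1 (fun q => q.2 + q.1) (fun p => by simp [φ₁inv, πmap]) lam

theorem commute_torusAct_φ₂ : Function.Commute (torusAct lam) (φ₂ a b) :=
  commute_torusAct_of_πmap (fun q => Complex.exp (a * q.2))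
    (fun q => Complex.exp (b * q.2)) Prod.snd (fun _ => rfl) lam

theorem commute_torusAct_φ₂inv : Function.Commute (torusAct lam) (φ₂inv a b) :=
  commute_torusAct_of_πmap (fun q => Complex.exp (-(a * q.2)))
    (fun q => Complex.exp (-(b * q.2))) Prod.snd (fun _ => rfl) lam

theorem commute_torusAct_φ₃ : Function.Commute (torusAct lam) (φ₃ a b c) :=
  commute_torusAct_of_πmap 1 1
    (fun q => q.2 * Complex.exp (-((a + b + c) * q.1)) + (a + b) * q.1 ^ 2)
    (fun p => by simp [φ₃, πmap, mul_pow, mul_assoc]) lam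

theorem commute_torusAct_Fmap : Function.Commute (torusAct lam) (Fmap a b c) :=
  (commute_torusAct_φ₃ lam a b c).comp_right <| (commute_torusAct_φ₂inv lam a b).comp_right <|
    (commute_torusAct_φ₁inv lam).comp_right <| (commute_torusAct_φ₂ lam a b).comp_right <|
      commute_torusAct_φ₁ lam

end Factors

/-- For nonzero `a, b, c`, the basin of attraction `Ω` of `F` is invariant under
the torus action: if `(z,t,w) ∈ Ω` and `λ ∈ ℂ*`, then `(λz, t/λ, w) ∈ Ω`. -/
theorem basinF_torus_invariant (a b c : ℂ) (ha : a ≠ 0) (hb : b ≠ 0) (hc : c ≠ 0)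
    (z t w : ℂ) (hmem : (z, t, w) ∈ basinF a b c) (lam : ℂ) (hlam : lam ≠ 0) :
    (lam * z, t / lam, w) ∈ basinF a b c := by
  obtain ⟨hne, hlim⟩ := hmem
  let T := torusAct (Units.mk0 lam hlam)
  have hT : T (z, t, w) = (lam * z, t / lam, w) := torusAct_apply _ _
  have hcomm : Function.Commute T (Fmap a b c) := commute_torusAct_Fmap _ a b c
  rw [← hT]
  refine ⟨T.map_ne_zero_iff.mpr hne, ?_⟩
  simpa only [map_zero] using tendsto_iterate_of_semiconj hcomm T.continuous.continuousAt hlim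
end

section
/- Let a, b, c be nonzero complex numbers and let G : ℂ² → ℂ² be the holomorphic map satisfying π ∘ F = G ∘ π with π(z,t,w) = (zt, w). Then G fixes the line {ζ = 0} pointwise, i.e. G(0, w) = (0, w) for all w ∈ ℂ; consequently, every point (x, y) of the basin Ω̃ = {q ∈ ℂ² \ {0} : G^n(q) → 0} satisfies x ≠ 0. -/
open Filter Set

/- On `{zt = 0}` the shears `φ₁`, `φ₁⁻¹` and the overshear `φ₃` are the identity, and `φ₂` maps this
set to itself, so the commutator `φ₂⁻¹ ∘ φ₁⁻¹ ∘ φ₂ ∘ φ₁` reduces there to `φ₂⁻¹ ∘ φ₂`. Hence `F`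
fixes the fibre of `π` over the axis pointwise, and the semiconjugacy carries fixed points down. -/

section FixedPoints

open Function

variable {p : ℂ × ℂ × ℂ}

theorem isFixedPt_φ₁ (hp : p.1 * p.2.1 = 0) : IsFixedPt φ₁ p := by
  simp [IsFixedPt, φ₁, hp]

theorem isFixedPt_φ₁inv (hp : p.1 * p.2.1 = 0) : IsFixedPt φ₁inv p := by
  simp [IsFixedPt, φ₁inv, hp]

theorem isFixedPt_φ₃ (a b c : ℂ) (hp : p.1 * p.2.1 = 0) : IsFixedPt (φ₃ a b c) p := by
  simp [IsFixedPt, φ₃, mul_assoc, ← mul_pow, hp]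

theorem leftInverse_φ₂inv_φ₂ (a b : ℂ) : LeftInverse (φ₂inv a b) (φ₂ a b) := fun p ↦ by
  simp [φ₂, φ₂inv, mul_assoc, ← Complex.exp_add]

theorem φ₂_fst_mul_snd_fst (a b : ℂ) (p : ℂ × ℂ × ℂ) :
    (φ₂ a b p).1 * (φ₂ a b p).2.1 = p.1 * p.2.1 * Complex.exp ((a + b) * p.2.2) := by
  rw [add_mul, Complex.exp_add]
  exact mul_mul_mul_comm ..

theorem isFixedPt_Fmap (a b c : ℂ) (hp : p.1 * p.2.1 = 0) : IsFixedPt (Fmap a b c) p := by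
  have hφ₂p : (φ₂ a b p).1 * (φ₂ a b p).2.1 = 0 := by rw [φ₂_fst_mul_snd_fst, hp, zero_mul]
  calc
    φ₃ a b c (φ₂inv a b (φ₁inv (φ₂ a b (φ₁ p))))
      = φ₃ a b c (φ₂inv a b (φ₁inv (φ₂ a b p))) := by rw [isFixedPt_φ₁ hp]
    _ = φ₃ a b c (φ₂inv a b (φ₂ a b p)) := by rw [isFixedPt_φ₁inv hφ₂p]
    _ = φ₃ a b c p := by rw [leftInverse_φ₂inv_φ₂]
    _ = p := isFixedPt_φ₃ a b c hp

theorem tendsto_iterate_iff_of_isFixedPt {X : Type*} [TopologicalSpace X] [T1Space X] {f : X → X}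
    {x y : X} (hx : IsFixedPt f x) :
    Tendsto (fun n ↦ f^[n] x) atTop (nhds y) ↔ x = y := by
  simp only [iterate_fixed hx, tendsto_const_nhds_iff]

theorem notMem_basinG_of_isFixedPt {G : ℂ × ℂ → ℂ × ℂ} {q : ℂ × ℂ} (hq : IsFixedPt G q) :
    q ∉ basinG G :=
  fun ⟨hq_ne, hlim⟩ ↦ hq_ne ((tendsto_iterate_iff_of_isFixedPt hq).mp hlim)

end FixedPoints

/-- For nonzero `a, b, c` and `G` holomorphic with `π ∘ F = G ∘ π`, the map `G`
fixes the line `{ζ = 0}` pointwise; consequently every `(x, y)` in the basin `Ω̃` of `G`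
satisfies `x ≠ 0`. -/
theorem semiconjugate_fixes_axis (a b c : ℂ) (ha : a ≠ 0) (hb : b ≠ 0) (hc : c ≠ 0)
    (G : ℂ × ℂ → ℂ × ℂ) (hG : Differentiable ℂ G)
    (hsemi : ∀ p : ℂ × ℂ × ℂ, πmap (Fmap a b c p) = G (πmap p)) :
    (∀ w : ℂ, G (0, w) = (0, w)) ∧
    (∀ x y : ℂ, (x, y) ∈ basinG G → x ≠ 0) := by
  have hfix (w : ℂ) : G (0, w) = (0, w) := by
    have hF : Function.IsFixedPt (Fmap a b c) (0, 0, w) := isFixedPt_Fmap a b c (zero_mul 0)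
    simpa only [πmap, zero_mul] using (hF.map hsemi).eq
  refine ⟨hfix, ?_⟩
  rintro _ y hy rfl
  exact notMem_basinG_of_isFixedPt (hfix y) hy
end

section
/- Let a = b be positive real numbers and c > 2a a real number. Let Ω = {p ∈ ℂ³ \ {0} : F^n(p) → 0} and Ω̃ = {q ∈ ℂ² \ {0} : G^n(q) → 0} be the basins of attraction of F and of G, where G satisfies π ∘ F = G ∘ π with π(z,t,w) = (zt, w). If φ : Ω̃ → ℂ² is a biholomorphism of Ω̃ onto ℂ² (a bijective holomorphic map with holomorphic inverse), then the map Ψ : Ω → ℂ³ defined by Ψ(z,t,w) = (z, φ(zt, w)) is injective, holomorphic, has holomorphic inverse on its image, and Ψ(Ω) = ℂ* × ℂ²; in particular Ω is biholomorphic to ℂ* × ℂ². -/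
/-!
Put `σ(z,t,w) = -zt·e^{(a+b)(w-zt)}`. One step of `F` multiplies `z` by `e^{aσ}` and `t` by
`e^{bσ}`, so `zₙ = z·e^{aSₙ}` and `tₙ = t·e^{bSₙ}`, where `Sₙ` is the sum of `σ` along the orbit.
If `b = r·a` with `r > 0`, the real parts of `a·Sₙ`, `b·Sₙ` and `(a+b)·Sₙ` are positive multiples of
each other; hence, when `zt ≠ 0`, already `zₙtₙ → 0` forces `zₙ → 0` and `tₙ → 0`. Points with
`zt = 0` are fixed by `F`, and so the points `(0,w)` are fixed by `G`. It follows that `Ω = π⁻¹(Ω̃)`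
and that `Ω̃` misses `{0} × ℂ`. Since `(z,t,w) ↦ (z,zt,w)` is invertible where `z ≠ 0`, it
identifies `Ω` with `ℂ* × Ω̃`, and `φ` identifies the latter with `ℂ* × ℂ²`.
-/

open Filter Set

section BlowupLift

variable {𝕜 W E : Type*}

/-- The lift `Ψ(z,t,w) = (z, φ(zt, w))` of `φ` through the blow-up chart `(z,t,w) ↦ (z, zt, w)`. -/
def blowupLift [Mul 𝕜] (φ : 𝕜 × W → E) (p : 𝕜 × 𝕜 × W) : 𝕜 × E :=
  (p.1, φ (p.1 * p.2.1, p.2.2))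

/-- The inverse `(z, e) ↦ (z, ψ₁(e) / z, ψ₂(e))` of `blowupLift φ`, where `ψ` is the inverse of `φ`.
It is meaningful for `z ≠ 0` only. -/
def blowupLiftInv [Div 𝕜] (ψ : E → 𝕜 × W) (q : 𝕜 × E) : 𝕜 × 𝕜 × W :=
  (q.1, (ψ q.2).1 / q.1, (ψ q.2).2)

section Bijection

variable [CommGroupWithZero 𝕜] {φ : 𝕜 × W → E} {ψ : E → 𝕜 × W} {B : Set (𝕜 × W)} {U : Set E}

lemma mapsTo_blowupLift (hB : ∀ q ∈ B, q.1 ≠ 0) (hφ : MapsTo φ B U) :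
    MapsTo (blowupLift φ) {p | (p.1 * p.2.1, p.2.2) ∈ B} ({0}ᶜ ×ˢ U) :=
  fun _ hp => ⟨left_ne_zero_of_mul (hB _ hp), hφ hp⟩

lemma mapsTo_blowupLiftInv (hψ : MapsTo ψ U B) :
    MapsTo (blowupLiftInv ψ) ({0}ᶜ ×ˢ U) {p | (p.1 * p.2.1, p.2.2) ∈ B} := by
  rintro ⟨z, e⟩ ⟨hz, he⟩
  simpa [blowupLiftInv, mul_div_cancel₀ _ hz] using hψ he

lemma invOn_blowupLiftInv (hB : ∀ q ∈ B, q.1 ≠ 0) (h : InvOn ψ φ B U) :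
    InvOn (blowupLiftInv ψ) (blowupLift φ) {p | (p.1 * p.2.1, p.2.2) ∈ B} ({0}ᶜ ×ˢ U) := by
  constructor
  · intro p hp
    have hz : p.1 ≠ 0 := left_ne_zero_of_mul (hB _ hp)
    simp only [blowupLift, blowupLiftInv, h.1 hp, mul_div_cancel_left₀ _ hz]
  · rintro ⟨z, e⟩ ⟨hz, he⟩
    simp only [blowupLift, blowupLiftInv, mul_div_cancel₀ _ hz, h.2 he]

end Bijection

variable [NontriviallyNormedField 𝕜] [NormedAddCommGroup W] [NormedSpace 𝕜 W]
  [NormedAddCommGroup E] [NormedSpace 𝕜 E]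

lemma differentiableOn_blowupLift {φ : 𝕜 × W → E} {B : Set (𝕜 × W)}
    (hφ : DifferentiableOn 𝕜 φ B) :
    DifferentiableOn 𝕜 (blowupLift φ) {p | (p.1 * p.2.1, p.2.2) ∈ B} :=
  differentiableOn_fst.prodMk (hφ.comp (by fun_prop) fun _ hp => hp)

lemma differentiableOn_blowupLiftInv {ψ : E → 𝕜 × W} {U : Set E}
    (hψ : DifferentiableOn 𝕜 ψ U) :
    DifferentiableOn 𝕜 (blowupLiftInv ψ) ({0}ᶜ ×ˢ U) := by
  have hψ₂ : DifferentiableOn 𝕜 (fun q : 𝕜 × E => ψ q.2) ({0}ᶜ ×ˢ U) :=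
    hψ.comp differentiableOn_snd fun _ hq => hq.2
  have hquot : DifferentiableOn 𝕜 (fun q : 𝕜 × E => (ψ q.2).1 / q.1) ({0}ᶜ ×ˢ U) := by
    simp only [div_eq_mul_inv]
    exact hψ₂.fst.fun_mul (differentiableOn_fst.fun_inv fun _ hq => hq.1)
  exact differentiableOn_fst.prodMk (hquot.prodMk hψ₂.snd)

end BlowupLift

lemma eq_of_isFixedPt_of_tendsto_iterate {X : Type*} [TopologicalSpace X] [T2Space X] {f : X → X}
    {x y : X} (hx : Function.IsFixedPt f x) (hy : Tendsto (fun n => f^[n] x) atTop (nhds y)) :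
    x = y := by
  have hconst : (fun n => f^[n] x) = fun _ => x := funext fun n => hx.iterate n
  exact tendsto_nhds_unique tendsto_const_nhds (hconst ▸ hy)

lemma tendsto_exp_ofReal_mul_nhds_zero_iff {ι : Type*} {l : Filter ι} {f : ι → ℂ} {r : ℝ}
    (hr : 0 < r) :
    Tendsto (fun i => Complex.exp (r * f i)) l (nhds 0) ↔
      Tendsto (fun i => Complex.exp (f i)) l (nhds 0) := by
  simp only [Complex.tendsto_exp_nhds_zero_iff, Complex.re_ofReal_mul,
    tendsto_const_mul_atBot_of_pos hr]

/-- The function `σ` for which `F` multiplies `z` by `e^{aσ}` and `t` by `e^{bσ}`. -/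
noncomputable def scalingExponent (a b : ℂ) (p : ℂ × ℂ × ℂ) : ℂ :=
  -(p.1 * p.2.1 * Complex.exp ((a + b) * (p.2.2 - p.1 * p.2.1)))

section Dynamics

variable {a b c : ℂ} {p : ℂ × ℂ × ℂ}

lemma Fmap_apply : Fmap a b c p = φ₃ a b c
    (p.1 * Complex.exp (a * scalingExponent a b p),
      p.2.1 * Complex.exp (b * scalingExponent a b p),
      p.2.2 - p.1 * p.2.1 - scalingExponent a b p) := by
  have hprod : (φ₂ a b (φ₁ p)).1 * (φ₂ a b (φ₁ p)).2.1 = -scalingExponent a b p := by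
    simp only [φ₁, φ₂, scalingExponent, add_mul, Complex.exp_add]
    ring
  have hshear : φ₁inv (φ₂ a b (φ₁ p)) = ((φ₂ a b (φ₁ p)).1, (φ₂ a b (φ₁ p)).2.1,
      p.2.2 - p.1 * p.2.1 - scalingExponent a b p) := by
    rw [φ₁inv, hprod, ← sub_eq_add_neg]
    rfl
  simp only [Fmap, Function.comp_apply, hshear]
  simp only [φ₂inv, φ₂, φ₁, mul_assoc, ← Complex.exp_add]
  ring_nf

lemma Fmap_fst : (Fmap a b c p).1 = p.1 * Complex.exp (a * scalingExponent a b p) := by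
  simp only [Fmap_apply, φ₃]

lemma Fmap_snd_fst : (Fmap a b c p).2.1 = p.2.1 * Complex.exp (b * scalingExponent a b p) := by
  simp only [Fmap_apply, φ₃]

lemma isFixedPt_Fmap_of_mul_eq_zero (h : p.1 * p.2.1 = 0) :
    Function.IsFixedPt (Fmap a b c) p := by
  have hσ : scalingExponent a b p = 0 := by simp [scalingExponent, h]
  have hsq : p.1 ^ 2 * p.2.1 ^ 2 = 0 := by rw [← mul_pow, h, zero_pow two_ne_zero]
  simp [Function.IsFixedPt, Fmap_apply, hσ, φ₃, mul_assoc, h, hsq]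

lemma iterate_Fmap_fst (n : ℕ) : ((Fmap a b c)^[n] p).1 =
    p.1 * Complex.exp (a * birkhoffSum (Fmap a b c) (scalingExponent a b) n p) := by
  induction n with
  | zero => simp
  | succ n ih =>
    rw [Function.iterate_succ_apply', Fmap_fst, ih, birkhoffSum_succ, mul_add, Complex.exp_add,
      mul_assoc]

lemma iterate_Fmap_snd_fst (n : ℕ) : ((Fmap a b c)^[n] p).2.1 =
    p.2.1 * Complex.exp (b * birkhoffSum (Fmap a b c) (scalingExponent a b) n p) := by
  induction n with
  | zero => simp
  | succ n ih =>
    rw [Function.iterate_succ_apply', Fmap_snd_fst, ih, birkhoffSum_succ, mul_add, Complex.exp_add,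
      mul_assoc]

lemma continuous_πmap : Continuous πmap := by
  unfold πmap
  fun_prop

lemma πmap_zero : πmap 0 = 0 := by
  simp [πmap]

lemma tendsto_iterate_Fmap_of_tendsto_πmap {r : ℝ} (hr : 0 < r) (hab : b = r * a)
    (hp : p.1 * p.2.1 ≠ 0)
    (h : Tendsto (fun n => πmap ((Fmap a b c)^[n] p)) atTop (nhds 0)) :
    Tendsto (fun n => (Fmap a b c)^[n] p) atTop (nhds 0) := by
  obtain ⟨S, hfst, hsnd⟩ : ∃ S : ℕ → ℂ,
      (∀ n, ((Fmap a b c)^[n] p).1 = p.1 * Complex.exp (a * S n)) ∧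
        ∀ n, ((Fmap a b c)^[n] p).2.1 = p.2.1 * Complex.exp (b * S n) :=
    ⟨_, iterate_Fmap_fst, iterate_Fmap_snd_fst⟩
  have hprod : Tendsto (fun n => p.1 * p.2.1 * Complex.exp ((1 + r : ℝ) * (a * S n)))
      atTop (nhds 0) := by
    refine h.fst_nhds.congr fun n => ?_
    simp only [πmap, hfst, hsnd]
    rw [mul_mul_mul_comm, ← Complex.exp_add]
    congr 2
    push_cast
    rw [hab]
    ring
  have hexp_a : Tendsto (fun n => Complex.exp (a * S n)) atTop (nhds 0) := by
    rw [← tendsto_exp_ofReal_mul_nhds_zero_iff (by positivity : 0 < 1 + r)]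
    simpa only [inv_mul_cancel_left₀ hp, mul_zero] using hprod.const_mul (p.1 * p.2.1)⁻¹
  have hexp_b : Tendsto (fun n => Complex.exp (b * S n)) atTop (nhds 0) := by
    simpa only [hab, mul_assoc] using (tendsto_exp_ofReal_mul_nhds_zero_iff hr).mpr hexp_a
  have hz : Tendsto (fun n => ((Fmap a b c)^[n] p).1) atTop (nhds 0) := by
    simpa only [hfst, mul_zero] using hexp_a.const_mul p.1
  have ht : Tendsto (fun n => ((Fmap a b c)^[n] p).2.1) atTop (nhds 0) := by
    simpa only [hsnd, mul_zero] using hexp_b.const_mul p.2.1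
  exact hz.prodMk_nhds (ht.prodMk_nhds h.snd_nhds)

lemma mul_ne_zero_of_mem_basinF (hp : p ∈ basinF a b c) : p.1 * p.2.1 ≠ 0 := fun h =>
  hp.1 (eq_of_isFixedPt_of_tendsto_iterate (isFixedPt_Fmap_of_mul_eq_zero h) hp.2)

variable {G : ℂ × ℂ → ℂ × ℂ}

lemma fst_ne_zero_of_mem_basinG (hsemi : Function.Semiconj πmap (Fmap a b c) G) {q : ℂ × ℂ}
    (hq : q ∈ basinG G) : q.1 ≠ 0 := by
  intro h
  have hq_eq : πmap (0, 0, q.2) = q := Prod.ext (by simp [πmap, h]) rfl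
  have hfixed : Function.IsFixedPt G (πmap (0, 0, q.2)) :=
    (isFixedPt_Fmap_of_mul_eq_zero (mul_zero 0)).map hsemi
  exact hq.1 (eq_of_isFixedPt_of_tendsto_iterate (hq_eq ▸ hfixed) hq.2)

lemma basinF_eq_preimage_basinG {r : ℝ} (hr : 0 < r) (hab : b = r * a)
    (hsemi : Function.Semiconj πmap (Fmap a b c) G) :
    basinF a b c = πmap ⁻¹' basinG G := by
  ext p
  have hiter (n : ℕ) : πmap ((Fmap a b c)^[n] p) = G^[n] (πmap p) := hsemi.iterate_right n p
  constructor
  · intro hp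
    refine ⟨fun h => mul_ne_zero_of_mem_basinF hp (congrArg Prod.fst h), ?_⟩
    have hlim := (continuous_πmap.tendsto' 0 0 πmap_zero).comp hp.2
    exact hlim.congr hiter
  · intro hq
    refine ⟨fun h => hq.1 (h ▸ πmap_zero), ?_⟩
    exact tendsto_iterate_Fmap_of_tendsto_πmap hr hab (fst_ne_zero_of_mem_basinG hsemi hq)
      (hq.2.congr fun n => (hiter n).symm)

theorem basin_biholo_via_psi_general {r : ℝ} (hr : 0 < r) (hab : b = r * a)
    (hsemi : Function.Semiconj πmap (Fmap a b c) G)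
    {E : Type*} [NormedAddCommGroup E] [NormedSpace ℂ E] {U : Set E}
    {φ : ℂ × ℂ → E} (hφ : DifferentiableOn ℂ φ (basinG G)) (hφU : MapsTo φ (basinG G) U)
    {ψ : E → ℂ × ℂ} (hψ : DifferentiableOn ℂ ψ U) (hψU : MapsTo ψ U (basinG G))
    (hinv : InvOn ψ φ (basinG G) U) :
    BijOn (blowupLift φ) (basinF a b c) ({0}ᶜ ×ˢ U) ∧
    InvOn (blowupLiftInv ψ) (blowupLift φ) (basinF a b c) ({0}ᶜ ×ˢ U) ∧
    DifferentiableOn ℂ (blowupLift φ) (basinF a b c) ∧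
    DifferentiableOn ℂ (blowupLiftInv ψ) ({0}ᶜ ×ˢ U) := by
  have hne : ∀ q ∈ basinG G, q.1 ≠ 0 := fun _ => fst_ne_zero_of_mem_basinG hsemi
  have hΨ := invOn_blowupLiftInv hne hinv
  rw [basinF_eq_preimage_basinG hr hab hsemi]
  exact ⟨hΨ.bijOn (mapsTo_blowupLift hne hφU) (mapsTo_blowupLiftInv hψU), hΨ,
    differentiableOn_blowupLift hφ, differentiableOn_blowupLiftInv hψ⟩

end Dynamics

/-- Let `a = b > 0` real and `c > 2a` real, and `G` holomorphic with
`π ∘ F = G ∘ π`. If `φ : Ω̃ → ℂ²` is a biholomorphism onto `ℂ²`, then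
`Ψ(z,t,w) = (z, φ(zt, w))` is injective and holomorphic on `Ω`, has holomorphic inverse
on its image, and `Ψ(Ω) = ℂ* × ℂ²`; in particular `Ω` is biholomorphic to `ℂ* × ℂ²`. -/
theorem basin_biholo_via_psi (a c : ℝ) (ha : 0 < a) (hc : 2 * a < c)
    (G : ℂ × ℂ → ℂ × ℂ) (hG : Differentiable ℂ G)
    (hsemi : ∀ p : ℂ × ℂ × ℂ, πmap (Fmap (a : ℂ) (a : ℂ) (c : ℂ) p) = G (πmap p))
    (φ : ℂ × ℂ → ℂ × ℂ) (hφ : DifferentiableOn ℂ φ (basinG G))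
    (hφbij : Set.BijOn φ (basinG G) Set.univ)
    (ψ : ℂ × ℂ → ℂ × ℂ) (hψ : Differentiable ℂ ψ)
    (hψφ : ∀ q ∈ basinG G, ψ (φ q) = q) (hφψ : ∀ q : ℂ × ℂ, φ (ψ q) = q) :
    Set.InjOn (fun p : ℂ × ℂ × ℂ => (p.1, φ (p.1 * p.2.1, p.2.2)))
      (basinF (a : ℂ) (a : ℂ) (c : ℂ)) ∧
    DifferentiableOn ℂ (fun p : ℂ × ℂ × ℂ => (p.1, φ (p.1 * p.2.1, p.2.2)))
      (basinF (a : ℂ) (a : ℂ) (c : ℂ)) ∧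
    (fun p : ℂ × ℂ × ℂ => ((p.1, φ (p.1 * p.2.1, p.2.2)) : ℂ × ℂ × ℂ)) ''
        basinF (a : ℂ) (a : ℂ) (c : ℂ) = {q : ℂ × ℂ × ℂ | q.1 ≠ 0} ∧
    ∃ Ψinv : ℂ × ℂ × ℂ → ℂ × ℂ × ℂ,
      DifferentiableOn ℂ Ψinv {q : ℂ × ℂ × ℂ | q.1 ≠ 0} ∧
      (∀ p ∈ basinF (a : ℂ) (a : ℂ) (c : ℂ),
        Ψinv (p.1, φ (p.1 * p.2.1, p.2.2)) = p) ∧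
      (∀ q ∈ {q : ℂ × ℂ × ℂ | q.1 ≠ 0},
        ((Ψinv q).1, φ ((Ψinv q).1 * (Ψinv q).2.1, (Ψinv q).2.2)) = q) := by
  have h := basin_biholo_via_psi_general one_pos (by simp) hsemi hφ hφbij.mapsTo
    hψ.differentiableOn (LeftInvOn.mapsTo hψφ hφbij.surjOn) ⟨hψφ, fun q _ => hφψ q⟩
  rw [prod_univ] at h
  obtain ⟨hbij, hinv, hΨ, hΨinv⟩ := h
  exact ⟨hbij.injOn, hΨ, hbij.image_eq, _, hΨinv, hinv.1, hinv.2⟩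
end
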